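/- Let u < 0, t ∈ ℝ, and let f : [u, 0] → ℝ be continuously differentiable. Define φ̂(λ) := ∫_u^λ (f'(ξ) + 6t) √(λ − ξ) dξ for λ ∈ [u, 0] and θ(λ;u) := (1/(2√(λ−u))) ∫_u^λ f'(ξ)/√(λ−ξ) dξ for λ ∈ (u, 0]. Then for every λ ∈ (u, 0), φ̂ is differentiable at λ with φ̂'(λ) = √(λ − u) · (6t + θ(λ;u)). -/

import Mathlib

/-!
Only boundedness and measurability of `g = f' + 6t` on `(u, 0)` matter for differentiability.
Fix `λ = lam` and split `∫_u^l g(ξ) √(l - ξ) dξ` at `ξ = λ`.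

* On the fixed interval `(u, λ)`, the elementary bound
  `|√(l - ξ) - √(λ - ξ)| ≤ |l - λ| / √(λ - ξ)` holds for *every* `l`, since negative numbers have
  square root `0`. Dominated convergence then allows differentiation under the integral sign at the
  single point `λ` (`hasDerivAt_fixed_part`), even though the kernels have no common integrable
  Lipschitz constant near `λ`.
* The remaining piece `∫_λ^l g(ξ) √(l - ξ) dξ` is `O(|l - λ|^{3/2})`, so it has derivative `0`
  (`hasDerivAt_moving_part`).

The stated form of the derivative follows from `∫_u^λ dξ / √(λ - ξ) = 2 √(λ - u)`.
-/

open MeasureTheory Set Filter Topology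

lemma abs_sqrt_sub_sqrt_le {a b : ℝ} (hb : 0 < b) :
    |√a - √b| ≤ 1 / √b * |a - b| := by
  have hs : 0 < √b := Real.sqrt_pos.2 hb
  rw [one_div, inv_mul_eq_div, le_div_iff₀ hs]
  rcases le_total a 0 with ha | ha
  · rw [Real.sqrt_eq_zero_of_nonpos ha, zero_sub, abs_neg, abs_of_pos hs, abs_of_nonpos (by linarith),
      Real.mul_self_sqrt hb.le]
    linarith
  · have h : a - b = (√a - √b) * (√a + √b) := by
      have h1 := Real.mul_self_sqrt ha
      have h2 := Real.mul_self_sqrt hb.le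
      linarith
    have h0 := Real.sqrt_nonneg a
    rw [h, abs_mul, abs_of_nonneg (add_nonneg h0 hs.le)]
    exact mul_le_mul_of_nonneg_left (by linarith) (abs_nonneg _)

lemma one_div_sqrt_eq_rpow (x : ℝ) (hx : 0 ≤ x) : 1 / √x = x ^ (-(1 / 2) : ℝ) := by
  rw [Real.rpow_neg hx, Real.sqrt_eq_rpow, one_div]

lemma intervalIntegrable_one_div_sqrt {u lam : ℝ} (h : u ≤ lam) :
    IntervalIntegrable (fun ξ => 1 / √(lam - ξ)) volume u lam := by
  have h1 : IntervalIntegrable (fun x : ℝ => x ^ (-(1 / 2) : ℝ)) volume (lam - u) 0 :=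
    intervalIntegral.intervalIntegrable_rpow' (by norm_num)
  have h2 := h1.comp_sub_left lam
  simp only [sub_sub_cancel, sub_zero] at h2
  refine h2.congr fun x hx => ?_
  rw [uIoc_of_le h] at hx
  exact (one_div_sqrt_eq_rpow _ (by linarith [hx.2])).symm

lemma integral_one_div_sqrt {u lam : ℝ} (h : u ≤ lam) :
    ∫ ξ in u..lam, 1 / √(lam - ξ) = 2 * √(lam - u) := by
  rw [intervalIntegral.integral_comp_sub_left (fun x => 1 / √x) lam, sub_self]
  have : ∫ x in (0 : ℝ)..(lam - u), 1 / √x = ∫ x in (0 : ℝ)..(lam - u), x ^ (-(1 / 2) : ℝ) := by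
    refine intervalIntegral.integral_congr fun x hx => ?_
    rw [uIcc_of_le (by linarith)] at hx
    exact one_div_sqrt_eq_rpow x hx.1
  rw [this, integral_rpow (Or.inl (by norm_num)), Real.sqrt_eq_rpow]
  norm_num
  ring

lemma intervalIntegrable_mul_of_bounded {g k : ℝ → ℝ} {a b C : ℝ} (hab : a ≤ b)
    (hg : Measurable g) (hC : ∀ x ∈ Ioo a b, |g x| ≤ C) (hk : IntervalIntegrable k volume a b) :
    IntervalIntegrable (fun x => g x * k x) volume a b := by
  rw [intervalIntegrable_iff_integrableOn_Ioo_of_le hab] at hk ⊢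
  refine Integrable.bdd_mul (c := C) hk hg.aestronglyMeasurable ?_
  exact (ae_restrict_iff' measurableSet_Ioo).2 (Eventually.of_forall hC)

/-- Differentiation under the integral sign over the fixed interval `(u, lam)`, at the endpoint
`lam` itself. -/
lemma hasDerivAt_fixed_part {g : ℝ → ℝ} {u lam C : ℝ} (h : u < lam)
    (hg : Measurable g) (hC : ∀ x ∈ Ioo u lam, |g x| ≤ C) :
    HasDerivAt (fun l => ∫ ξ in u..lam, g ξ * √(l - ξ))
      (∫ ξ in u..lam, g ξ * (1 / (2 * √(lam - ξ)))) lam := by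
  simp only [intervalIntegral.integral_of_le h.le, integral_Ioc_eq_integral_Ioo]
  have hC0 : 0 ≤ C := by
    obtain ⟨x, hx⟩ := nonempty_Ioo.2 h
    exact (abs_nonneg _).trans (hC x hx)
  have key := hasFDerivAt_integral_of_dominated_loc_of_lip' (𝕜 := ℝ) (x₀ := lam) (s := univ)
    (μ := volume.restrict (Ioo u lam)) (F := fun l ξ => g ξ * √(l - ξ))
    (F' := fun ξ => ContinuousLinearMap.toSpanSingleton ℝ (g ξ * (1 / (2 * √(lam - ξ)))))
    (bound := fun ξ => C * (1 / √(lam - ξ))) univ_mem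
    (fun l _ => by
      have : Measurable fun ξ => g ξ * √(l - ξ) := by fun_prop
      exact this.aestronglyMeasurable)
    (by
      have := intervalIntegrable_mul_of_bounded h.le hg hC
        (Continuous.intervalIntegrable (u := fun ξ => √(lam - ξ)) (by fun_prop) u lam)
      rwa [intervalIntegrable_iff_integrableOn_Ioo_of_le h.le] at this)
    (by
      have : Measurable fun ξ => g ξ * (1 / (2 * √(lam - ξ))) := by fun_prop
      exact (ContinuousLinearMap.toSpanSingletonCLE (𝕜 := ℝ) (E := ℝ)).continuous
        |>.comp_aestronglyMeasurable this.aestronglyMeasurable)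
    (by
      refine (ae_restrict_iff' measurableSet_Ioo).2 (Eventually.of_forall fun ξ hξ l _ => ?_)
      have h1 := abs_sqrt_sub_sqrt_le (a := l - ξ) (b := lam - ξ) (by linarith [hξ.2])
      rw [sub_sub_sub_cancel_right] at h1
      rw [← mul_sub, Real.norm_eq_abs, Real.norm_eq_abs, abs_mul, mul_assoc]
      exact mul_le_mul (hC ξ hξ) h1 (abs_nonneg _) hC0)
    (by
      have := (intervalIntegrable_one_div_sqrt h.le).const_mul C
      rwa [intervalIntegrable_iff_integrableOn_Ioo_of_le h.le] at this)
    (by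
      refine (ae_restrict_iff' measurableSet_Ioo).2 (Eventually.of_forall fun ξ hξ => ?_)
      have h1 : HasDerivAt (fun l => √(l - ξ)) (1 / (2 * √(lam - ξ))) lam :=
        ((hasDerivAt_id lam).sub_const ξ).sqrt (by simpa using (sub_pos.2 hξ.2).ne')
      exact (h1.const_mul (g ξ)).hasFDerivAt)
  have h2 := key.2.hasDerivAt
  rw [ContinuousLinearMap.integral_apply key.1] at h2
  simpa only [ContinuousLinearMap.toSpanSingleton_apply, one_smul] using h2

/-- The contribution of the interval between `lam` and `l` is `O(|l - lam|^{3/2})`. For `l < lam`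
it is even zero, by the convention `√x = 0` for `x < 0`. -/
lemma hasDerivAt_moving_part {g : ℝ → ℝ} {u b lam C : ℝ} (h : lam ∈ Ioo u b)
    (hC : ∀ x ∈ Ioo u b, |g x| ≤ C) :
    HasDerivAt (fun l => ∫ ξ in lam..l, g ξ * √(l - ξ)) 0 lam := by
  have hC0 : 0 ≤ C := (abs_nonneg _).trans (hC lam h)
  have bd : ∀ l ∈ Ioo u b,
      ‖∫ ξ in lam..l, g ξ * √(l - ξ)‖ ≤ C * √|l - lam| * |l - lam| := by
    intro l hl
    refine intervalIntegral.norm_integral_le_of_norm_le_const fun ξ hξ => ?_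
    have hmem : ξ ∈ Ioo u b := by
      rcases mem_uIoc.1 hξ with h' | h'
      · exact ⟨h.1.trans h'.1, h'.2.trans_lt hl.2⟩
      · exact ⟨hl.1.trans h'.1, h'.2.trans_lt h.2⟩
    rw [Real.norm_eq_abs, abs_mul, abs_of_nonneg (Real.sqrt_nonneg _)]
    refine mul_le_mul (hC ξ hmem) (Real.sqrt_le_sqrt ?_) (Real.sqrt_nonneg _) hC0
    rcases mem_uIoc.1 hξ with h' | h'
    · exact le_trans (by linarith) (le_abs_self _)
    · exact le_trans (by linarith) (abs_nonneg _)
  rw [hasDerivAt_iff_isLittleO]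
  simp only [intervalIntegral.integral_same, sub_zero, smul_zero]
  rw [Asymptotics.isLittleO_iff]
  intro c hc
  have ht : Tendsto (fun l : ℝ => C * √|l - lam|) (𝓝 lam) (𝓝 0) := by
    have : Continuous fun l : ℝ => C * √|l - lam| := by fun_prop
    simpa using this.tendsto lam
  filter_upwards [ht.eventually (gt_mem_nhds hc), Ioo_mem_nhds h.1 h.2] with l h1 h2
  exact (bd l h2).trans (mul_le_mul_of_nonneg_right h1.le (abs_nonneg _))

theorem phase_derivative (u t : ℝ) (hu : u < 0) (f : ℝ → ℝ)
    (hf : ContDiffOn ℝ 1 f (Set.Icc u 0)) :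
    ∀ lam ∈ Set.Ioo u (0 : ℝ),
      HasDerivAt (fun l => ∫ ξ in u..l, (deriv f ξ + 6 * t) * Real.sqrt (l - ξ))
        (Real.sqrt (lam - u) *
          (6 * t + 1 / (2 * Real.sqrt (lam - u)) *
            ∫ ξ in u..lam, deriv f ξ / Real.sqrt (lam - ξ)))
        lam := by
  intro lam hlam
  -- The bound is needed only on the open interval, where `deriv f` agrees with `derivWithin`;
  -- `deriv f` may be a junk value at the endpoints.
  obtain ⟨C, hC⟩ : ∃ C, ∀ x ∈ Ioo u 0, |deriv f x| ≤ C := by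
    obtain ⟨C, hC⟩ := isCompact_Icc.exists_bound_of_continuousOn
      (hf.continuousOn_derivWithin (uniqueDiffOn_Icc hu) le_rfl)
    refine ⟨C, fun x hx => ?_⟩
    rw [← derivWithin_of_mem_nhds (Icc_mem_nhds hx.1 hx.2)]
    exact hC x (Ioo_subset_Icc_self hx)
  have hfm : Measurable (deriv f) := measurable_deriv f
  have hgm : Measurable fun ξ => deriv f ξ + 6 * t := by fun_prop
  have hgC : ∀ x ∈ Ioo u 0, |deriv f x + 6 * t| ≤ C + |6 * t| := fun x hx =>
    (abs_add_le _ _).trans (by linarith [hC x hx])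
  have hsub : Ioo u lam ⊆ Ioo u 0 := Ioo_subset_Ioo_right hlam.2.le
  have hd := (hasDerivAt_fixed_part hlam.1 hgm fun x hx => hgC x (hsub hx)).add
    (hasDerivAt_moving_part hlam hgC)
  have hint : ∀ l ∈ Ioo u 0, ∀ m ∈ Ioo u 0,
      IntervalIntegrable (fun ξ => (deriv f ξ + 6 * t) * √(l - ξ)) volume u m := fun l _ m hm =>
    intervalIntegrable_mul_of_bounded hm.1.le hgm
      (fun x hx => hgC x (Ioo_subset_Ioo_right hm.2.le hx))
      (Continuous.intervalIntegrable (by fun_prop) u m)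
  have hsplit : (fun l => ∫ ξ in u..l, (deriv f ξ + 6 * t) * √(l - ξ)) =ᶠ[𝓝 lam]
      ((fun l => ∫ ξ in u..lam, (deriv f ξ + 6 * t) * √(l - ξ)) +
        fun l => ∫ ξ in lam..l, (deriv f ξ + 6 * t) * √(l - ξ)) := by
    filter_upwards [Ioo_mem_nhds hlam.1 hlam.2] with l hl
    exact (intervalIntegral.integral_add_adjacent_intervals (hint l hl lam hlam)
      ((hint l hl lam hlam).symm.trans (hint l hl l hl))).symm
  refine (hd.congr_of_eventuallyEq hsplit).congr_deriv ?_
  have hk := intervalIntegrable_one_div_sqrt hlam.1.le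
  have hfk := intervalIntegrable_mul_of_bounded hlam.1.le hfm (fun x hx => hC x (hsub hx)) hk
  have e : ∀ ξ, (deriv f ξ + 6 * t) * (1 / (2 * √(lam - ξ))) =
      1 / 2 * (deriv f ξ * (1 / √(lam - ξ))) + 3 * t * (1 / √(lam - ξ)) := fun ξ => by
    rw [one_div_mul_eq_div]; ring
  simp only [e]
  rw [intervalIntegral.integral_add (hfk.const_mul _) (hk.const_mul _),
    intervalIntegral.integral_const_mul, intervalIntegral.integral_const_mul,
    integral_one_div_sqrt hlam.1.le]
  simp only [mul_one_div]
  have hs : √(lam - u) ≠ 0 := (Real.sqrt_pos.2 (sub_pos.2 hlam.1)).ne'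
  field_simp
  ring
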